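/- Let r ∈ {2,3}, let c ∈ ℝ with c > 1, let m ∈ ℕ, and let p, q be primes with r < p < q ≤ cp. If p is large enough that 1/r + (p^m − 1)/(p^{m+1} − p^m) + 1/(cp) ≥ (log_2(r·c·p^{m+1}))/p, then K_1(C_{rp^m q}) = K_1^*(C_{rp^m q}) = 2 + (p^m − 1)/(p^m − p^{m−1}). -/

import Mathlib

open Finset

/-- `S(I)` is minimal zero-sum: nonempty, zero-sum, and no proper nonempty
subfamily is zero-sum. -/
def IsMinZeroSum {G : Type*} [AddCommGroup G] {ℓ : ℕ} (g : Fin ℓ → G)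
    (I : Finset (Fin ℓ)) : Prop :=
  I.Nonempty ∧ ∑ i ∈ I, g i = 0 ∧ ∀ J ⊂ I, J.Nonempty → ∑ i ∈ J, g i ≠ 0

/-- `P` is an irreducible factorization of the indexed multiset `g`: a partition
of the index set all of whose parts are minimal zero-sum. -/
def IsFactorization {G : Type*} [AddCommGroup G] {ℓ : ℕ} (g : Fin ℓ → G)
    (P : Finpartition (Finset.univ : Finset (Fin ℓ))) : Prop :=
  ∀ I ∈ P.parts, IsMinZeroSum g I

/-- `g` is a unique factorization indexed multiset (UFIM) over `G∖{0}`: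
all elements are nonzero and there is exactly one irreducible factorization. -/
def IsUFIM {G : Type*} [AddCommGroup G] {ℓ : ℕ} (g : Fin ℓ → G) : Prop :=
  (∀ i, g i ≠ 0) ∧
  ∃! P : Finpartition (Finset.univ : Finset (Fin ℓ)), IsFactorization g P

/-- The cross number `k(S) = ∑ 1/ord(g_i)`. -/
noncomputable def crossNum {G : Type*} [AddCommGroup G] {ℓ : ℕ} (g : Fin ℓ → G) : ℝ :=
  ∑ i, (1 : ℝ) / (addOrderOf (g i) : ℝ)

/-- `K₁(G)`: the maximal cross number of a UFIM over `G∖{0}`. -/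
noncomputable def K1 (G : Type*) [AddCommGroup G] : ℝ :=
  sSup {x : ℝ | ∃ (ℓ : ℕ) (g : Fin ℓ → G), IsUFIM g ∧ crossNum g = x}

/-- `N₁(G)`: the maximal length of a UFIM over `G∖{0}`. -/
noncomputable def N1 (G : Type*) [AddCommGroup G] : ℕ :=
  sSup {n : ℕ | ∃ g : Fin n → G, IsUFIM g}

/-- `K(G)`: the maximal cross number of a minimal zero-sum indexed multiset over `G∖{0}`. -/
noncomputable def Kcross (G : Type*) [AddCommGroup G] : ℝ :=
  sSup {x : ℝ | ∃ (ℓ : ℕ) (g : Fin ℓ → G), (∀ i, g i ≠ 0) ∧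
    IsMinZeroSum g Finset.univ ∧ crossNum g = x}

/-- `g` is zero-sum free: no nonempty subfamily is zero-sum. -/
def IsZeroSumFree {G : Type*} [AddCommGroup G] {ℓ : ℕ} (g : Fin ℓ → G) : Prop :=
  ∀ I : Finset (Fin ℓ), I.Nonempty → ∑ i ∈ I, g i ≠ 0

/-- The little cross number `k(G)`: the maximal cross number of a zero-sum free
indexed multiset over `G∖{0}`. -/
noncomputable def littleCross (G : Type*) [AddCommGroup G] : ℝ :=
  sSup {x : ℝ | ∃ (ℓ : ℕ) (g : Fin ℓ → G), (∀ i, g i ≠ 0) ∧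
    IsZeroSumFree g ∧ crossNum g = x}

/-!
A zero-sum family of nonzero elements is a UFIM if and only if its zero-sum subfamilies are closed
under intersection, and the latter property survives replacing a subfamily by its sum.

Upper bound. Merging subfamilies as long as this does not lower the cross number, one may assume
that every merge would lower it; then at most `l` terms have order `l * e`, for `l` prime, because
multiplication by `e` reduces this to the case of `l`-torsion in a cyclic group. Suppose that for
`l = r` or `l = q` at least `l - 1` terms have order `l`. Their subset sums fill the `l`-torsion,
so deleting them and multiplying the other terms by `l` preserves the closure property, costs at
most `1` in the cross number, and leaves a family over a cyclic group of order `p ^ m * q` or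
`r * p ^ m`. Otherwise the terms of order `r` and `q` contribute at most `1 - 2 / r` and
`1 - 2 / q`. The orders `p, …, p ^ m` contribute at most `kStar p m`, and since `r < p` and `r < q`
the remaining orders contribute at most `2 / r + 2 / q`.

Lower bound. If `h` has order `l ^ (e + 1)` and `N • h` has order `l`, then appending `l` terms of
order `l ^ (e + 1)` congruent to `h` modulo the `N`-torsion to a UFIM over the `N`-torsion gives a
UFIM with cross number larger by `1 / l ^ e`.
-/

section InterClosed

variable {G : Type*} [AddCommGroup G] {ι κ : Type*} [DecidableEq ι] [DecidableEq κ]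

/-- The family `g` has nonzero terms on `S`, and its zero-sum subfamilies are closed under
intersection. A zero-sum family with this property is the same thing as a UFIM, see
`IsUFIM.isInterClosed` and `IsInterClosed.isUFIM`, but the property passes to subfamilies, which
allows inductive arguments. -/
structure IsInterClosed (g : ι → G) (S : Finset ι) : Prop where
  ne_zero : ∀ i ∈ S, g i ≠ 0
  sum_inter : ∀ ⦃I⦄, I ⊆ S → ∀ ⦃J⦄, J ⊆ S →
    ∑ i ∈ I, g i = 0 → ∑ i ∈ J, g i = 0 → ∑ i ∈ I ∩ J, g i = 0

theorem IsInterClosed.biUnion {g : ι → G} {S : Finset ι} (hg : IsInterClosed g S)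
    {A : κ → Finset ι} {T : Finset κ} (hA : ∀ k ∈ T, A k ⊆ S)
    (hdisj : (T : Set κ).PairwiseDisjoint A) (hne : ∀ k ∈ T, ∑ i ∈ A k, g i ≠ 0) :
    IsInterClosed (fun k => ∑ i ∈ A k, g i) T := by
  have sum_eq {I : Finset κ} (hI : I ⊆ T) :
      ∑ k ∈ I, ∑ i ∈ A k, g i = ∑ i ∈ I.biUnion A, g i :=
    (sum_biUnion (hdisj.subset hI)).symm
  have inter_eq {I J : Finset κ} (hI : I ⊆ T) (hJ : J ⊆ T) :
      (I ∩ J).biUnion A = I.biUnion A ∩ J.biUnion A := by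
    ext i
    simp only [mem_biUnion, mem_inter]
    constructor
    · rintro ⟨k, ⟨hkI, hkJ⟩, hi⟩
      exact ⟨⟨k, hkI, hi⟩, k, hkJ, hi⟩
    · rintro ⟨⟨k, hkI, hi⟩, k', hkJ, hi'⟩
      obtain rfl : k = k' := hdisj.elim_finset (hI hkI) (hJ hkJ) i hi hi'
      exact ⟨k, ⟨hkI, hkJ⟩, hi⟩
  have biUnion_sub {I : Finset κ} (hI : I ⊆ T) : I.biUnion A ⊆ S :=
    biUnion_subset.2 fun k hk => hA k (hI hk)
  refine ⟨hne, fun I hI J hJ hI0 hJ0 => ?_⟩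
  rw [sum_eq (inter_subset_left.trans hI), inter_eq hI hJ]
  rw [sum_eq hI] at hI0
  rw [sum_eq hJ] at hJ0
  exact hg.sum_inter (biUnion_sub hI) (biUnion_sub hJ) hI0 hJ0

theorem IsInterClosed.comp_injective {g : ι → G} {S : Finset ι} (hg : IsInterClosed g S)
    {f : κ → ι} (hf : Function.Injective f) {T : Finset κ} (hT : ∀ k ∈ T, f k ∈ S) :
    IsInterClosed (g ∘ f) T := by
  simpa [Function.comp_def] using hg.biUnion (A := fun k => {f k}) (T := T)
    (fun k hk => singleton_subset_iff.2 (hT k hk))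
    (fun i _ j _ hij => disjoint_singleton.2 (hf.ne hij))
    (fun k hk => by simpa using hg.ne_zero _ (hT k hk))

end InterClosed

section Factorization

variable {G : Type*} [AddCommGroup G] {n : ℕ} {g : Fin n → G}

theorem exists_isMinZeroSum_subset {I : Finset (Fin n)} (hne : I.Nonempty)
    (hI : ∑ i ∈ I, g i = 0) : ∃ J ⊆ I, IsMinZeroSum g J := by
  obtain ⟨J, hJI, hJ⟩ := exists_minimal_le_of_wellFoundedLT
    (fun J : Finset (Fin n) => J.Nonempty ∧ ∑ i ∈ J, g i = 0) I ⟨hne, hI⟩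
  exact ⟨J, hJI, hJ.prop.1, hJ.prop.2, fun L hL hLne hL0 => hJ.not_prop_of_lt hL ⟨hLne, hL0⟩⟩

theorem exists_finpartition_isMinZeroSum (V : Finset (Fin n)) (hV : ∑ i ∈ V, g i = 0) :
    ∃ P : Finpartition V, ∀ A ∈ P.parts, IsMinZeroSum g A := by
  induction V using Finset.strongInduction with
  | H V ih =>
  obtain rfl | hne := V.eq_empty_or_nonempty
  · exact ⟨Finpartition.empty _, by simp⟩
  · obtain ⟨J, hJV, hJ⟩ := exists_isMinZeroSum_subset hne hV
    have hrest : ∑ i ∈ V \ J, g i = 0 := by rw [sum_sdiff_eq_sub hJV, hV, hJ.2.1, sub_zero]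
    obtain ⟨P, hP⟩ := ih (V \ J) (sdiff_ssubset hJV hJ.1) hrest
    refine ⟨P.extend hJ.1.ne_empty sdiff_disjoint (sdiff_union_of_subset hJV), fun A hA => ?_⟩
    obtain rfl | hA := mem_insert.1 hA
    exacts [hJ, hP A hA]

theorem exists_isFactorization_refining (hg : ∑ i, g i = 0) {I : Finset (Fin n)}
    (hne : I.Nonempty) (hI : ∑ i ∈ I, g i = 0) :
    ∃ P, IsFactorization g P ∧ ∀ i ∈ I, ∃ A ∈ P.parts, i ∈ A ∧ A ⊆ I := by
  let Q := (Finpartition.indiscrete hne.ne_empty).extendOfLE (subset_univ I)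
  have zero_sum (B) (hB : B ∈ Q.parts) : ∑ i ∈ B, g i = 0 := by
    obtain hB | rfl := Finpartition.mem_parts_or_eq_sdiff_of_mem_extendOfLE _ (subset_univ I) hB
    · rwa [mem_singleton.1 hB]
    · rw [sum_sdiff_eq_sub (subset_univ I), hg, hI, sub_zero]
  choose R hR using fun B hB => exists_finpartition_isMinZeroSum B (zero_sum B hB)
  have hIQ : I ∈ Q.parts :=
    Finpartition.parts_subset_extendOfLE _ _ (mem_singleton_self I)
  refine ⟨Q.bind R, fun A hA => ?_, fun i hi => ?_⟩
  · obtain ⟨B, hB, hAB⟩ := Finpartition.mem_bind.1 hA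
    exact hR B hB A hAB
  · obtain ⟨A, hA, hiA⟩ := (R I hIQ).exists_mem hi
    exact ⟨A, Finpartition.mem_bind.2 ⟨I, hIQ, hA⟩, hiA, (R I hIQ).subset hA⟩

theorem IsUFIM.sum_eq_zero (hg : IsUFIM g) : ∑ i, g i = 0 := by
  obtain ⟨P, hP⟩ := hg.2.exists
  rw [← P.biUnion_parts, sum_biUnion P.disjoint]
  exact Finset.sum_eq_zero fun A hA => (hP A hA).2.1

theorem IsUFIM.isInterClosed (hg : IsUFIM g) : IsInterClosed g univ := by
  obtain ⟨P, hP, huniq⟩ := hg.2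
  have exists_part {I : Finset (Fin n)} (hI : ∑ i ∈ I, g i = 0) (i) (hi : i ∈ I) :
      ∃ A ∈ P.parts, i ∈ A ∧ A ⊆ I := by
    obtain ⟨P', hP', hsub⟩ := exists_isFactorization_refining hg.sum_eq_zero ⟨i, hi⟩ hI
    exact huniq P' hP' ▸ hsub i hi
  refine ⟨fun i _ => hg.1 i, fun I _ J _ hI hJ => ?_⟩
  have inter_eq : {A ∈ P.parts | A ⊆ I ∩ J}.biUnion id = I ∩ J := by
    refine Subset.antisymm (biUnion_subset.2 fun A hA => (mem_filter.1 hA).2) fun i hi => ?_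
    obtain ⟨A, hA, hiA, hAI⟩ := exists_part hI i (mem_inter.1 hi).1
    obtain ⟨B, hB, hiB, hBJ⟩ := exists_part hJ i (mem_inter.1 hi).2
    obtain rfl : A = B := P.eq_of_mem_parts hA hB hiA hiB
    exact mem_biUnion.2 ⟨A, mem_filter.2 ⟨hA, subset_inter hAI hBJ⟩, hiA⟩
  rw [← inter_eq, sum_biUnion (P.disjoint.subset (filter_subset _ _))]
  exact Finset.sum_eq_zero fun A hA => (hP A (mem_filter.1 hA).1).2.1

theorem IsInterClosed.eq_of_isMinZeroSum (hg : IsInterClosed g univ) {A B : Finset (Fin n)}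
    (hA : IsMinZeroSum g A) (hB : IsMinZeroSum g B) (hAB : (A ∩ B).Nonempty) : A = B := by
  have h0 := hg.sum_inter (subset_univ A) (subset_univ B) hA.2.1 hB.2.1
  have hA' : A ∩ B = A := inter_subset_left.eq_of_not_ssubset fun h => hA.2.2 _ h hAB h0
  have hB' : A ∩ B = B := inter_subset_right.eq_of_not_ssubset fun h => hB.2.2 _ h hAB h0
  exact hA'.symm.trans hB'

theorem IsInterClosed.isUFIM (hg : IsInterClosed g univ) (h0 : ∑ i, g i = 0) : IsUFIM g := by
  obtain ⟨P, hP⟩ := exists_finpartition_isMinZeroSum univ h0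
  have parts_subset {P Q : Finpartition (univ : Finset (Fin n))} (hP : IsFactorization g P)
      (hQ : IsFactorization g Q) : P.parts ⊆ Q.parts := fun A hA => by
    obtain ⟨a, ha⟩ := (hP A hA).1
    obtain ⟨B, hB, haB⟩ := Q.exists_mem (mem_univ a)
    rwa [hg.eq_of_isMinZeroSum (hP A hA) (hQ B hB) ⟨a, mem_inter.2 ⟨ha, haB⟩⟩]
  exact ⟨fun i => hg.ne_zero i (mem_univ i), P, hP, fun Q hQ =>
    Finpartition.ext ((parts_subset hQ hP).antisymm (parts_subset hP hQ))⟩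

end Factorization

section SubsetSums

variable {G : Type*} [AddCommGroup G] {ι : Type*} {g : ι → G} {S : Finset ι} {l : ℕ}

/-- The set `{∑ i ∈ I, g i | I ⊆ S}` of subset sums of the family `g` on `S`. -/
def subsetSums [DecidableEq G] (g : ι → G) (S : Finset ι) : Finset G :=
  S.powerset.image fun I => ∑ i ∈ I, g i

theorem mem_subsetSums [DecidableEq G] {x : G} :
    x ∈ subsetSums g S ↔ ∃ I ⊆ S, ∑ i ∈ I, g i = x := by
  simp [subsetSums]

theorem subsetSums_insert [DecidableEq G] [DecidableEq ι] {a : ι} (ha : a ∉ S) :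
    subsetSums g (insert a S) = subsetSums g S ∪ (subsetSums g S).image (g a + ·) := by
  rw [subsetSums, subsetSums, powerset_insert, image_union, image_image, image_image]
  congr 1
  refine image_congr fun I hI => ?_
  exact sum_insert fun h => ha (mem_powerset.1 hI h)

theorem addOrderOf_le_card_of_add_mem {A : Finset G} {x : G} (h0 : 0 ∈ A)
    (hA : ∀ y ∈ A, x + y ∈ A) : addOrderOf x ≤ #A := by
  have nsmul_mem (k : ℕ) : k • x ∈ A := by
    induction k with
    | zero => rwa [zero_nsmul]
    | succ k ih => rw [succ_nsmul']; exact hA _ ih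
  exact le_card_of_inj_on_range (· • x) (fun k _ => nsmul_mem k)
    fun i hi j hj hij => nsmul_injOn_Iio_addOrderOf hi hj hij

theorem min_le_card_subsetSums [DecidableEq G] (hl : ∀ i ∈ S, l ≤ addOrderOf (g i)) :
    min l (#S + 1) ≤ #(subsetSums g S) := by
  classical
  induction S using Finset.induction_on with
  | empty => simp [subsetSums]
  | insert a S ha ih =>
    specialize ih fun i hi => hl i (mem_insert_of_mem hi)
    rw [subsetSums_insert ha, card_insert_of_notMem ha]
    by_cases hstable : ∀ y ∈ subsetSums g S, g a + y ∈ subsetSums g S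
    · have h0 : (0 : G) ∈ subsetSums g S := mem_subsetSums.2 ⟨∅, by simp⟩
      calc min l (#S + 1 + 1) ≤ l := min_le_left _ _
        _ ≤ addOrderOf (g a) := hl a (mem_insert_self a S)
        _ ≤ #(subsetSums g S) := addOrderOf_le_card_of_add_mem h0 hstable
        _ ≤ _ := card_le_card subset_union_left
    · push Not at hstable
      obtain ⟨y, hy, hy'⟩ := hstable
      have hlt : #(subsetSums g S) <
          #(subsetSums g S ∪ (subsetSums g S).image (g a + ·)) := by
        refine card_lt_card (subset_union_left.ssubset_of_ne fun h => hy' ?_)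
        rw [h]
        exact mem_union_right _ (mem_image_of_mem _ hy)
      omega

theorem exists_sum_eq_of_nsmul_eq_zero [Finite G] [IsAddCyclic G] (hl : l.Prime)
    (hne : ∀ i ∈ S, g i ≠ 0) (hS : ∀ i ∈ S, l • g i = 0) (hcard : l ≤ #S + 1) {x : G}
    (hx : l • x = 0) : ∃ I ⊆ S, ∑ i ∈ I, g i = x := by
  classical
  have := Fintype.ofFinite G
  have := Fact.mk hl
  have hle : l ≤ #(subsetSums g S) := by
    have hord (i) (hi : i ∈ S) : l ≤ addOrderOf (g i) :=
      (addOrderOf_eq_prime (hS i hi) (hne i hi)).ge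
    simpa [hcard] using min_le_card_subsetSums hord
  have hsub : subsetSums g S ⊆ ({a | l • a = 0} : Finset G) := fun y hy => by
    obtain ⟨I, hI, rfl⟩ := mem_subsetSums.1 hy
    rw [mem_filter_univ, smul_sum]
    exact sum_eq_zero fun i hi => hS i (hI hi)
  have heq := eq_of_subset_of_card_le hsub ((IsAddCyclic.card_nsmul_eq_zero_le hl.pos).trans hle)
  rw [← mem_subsetSums, heq, mem_filter_univ]
  exact hx

end SubsetSums

section TorsionFamilies

variable {G : Type*} [AddCommGroup G] [Finite G] [IsAddCyclic G]
variable {ι : Type*} {g : ι → G} {S : Finset ι} {l : ℕ}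

theorem exists_zeroSum_subset_mem_notMem (hl : l.Prime) (hne : ∀ i ∈ S, g i ≠ 0)
    (hS : ∀ i ∈ S, l • g i = 0) (hcard : l < #S) {x y : ι} (hx : x ∈ S) (hy : y ∈ S)
    (hxy : x ≠ y) : ∃ T ⊆ S, ∑ i ∈ T, g i = 0 ∧ y ∈ T ∧ x ∉ T := by
  classical
  have hsub : (S.erase x).erase y ⊆ S := (erase_subset _ _).trans (erase_subset _ _)
  have hcard' : l ≤ #((S.erase x).erase y) + 1 := by
    rw [card_erase_of_mem (mem_erase.2 ⟨hxy.symm, hy⟩), card_erase_of_mem hx]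
    omega
  obtain ⟨I, hI, hIy⟩ := exists_sum_eq_of_nsmul_eq_zero hl (fun i hi => hne i (hsub hi))
    (fun i hi => hS i (hsub hi)) hcard' (x := -g y) (by rw [smul_neg, hS y hy, neg_zero])
  have hyI : y ∉ I := fun h => notMem_erase y _ (hI h)
  have hxI : x ∉ I := fun h => notMem_erase x S (mem_of_mem_erase (hI h))
  refine ⟨insert y I, insert_subset hy (hI.trans hsub), ?_, mem_insert_self y I, ?_⟩
  · rw [sum_insert hyI, hIy, add_neg_cancel]
  · simp [hxy, hxI]

theorem IsInterClosed.card_le [DecidableEq ι] (hg : IsInterClosed g S) (hl : l.Prime)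
    (hS : ∀ i ∈ S, l • g i = 0) : #S ≤ l := by
  by_contra! hcard
  obtain ⟨x, hx, y, hy, hxy⟩ := one_lt_card.1 (hl.one_lt.trans hcard)
  obtain ⟨T₀, hT₀S, hT₀, hyT₀, -⟩ :=
    exists_zeroSum_subset_mem_notMem hl hg.ne_zero hS hcard hx hy hxy
  obtain ⟨T, -, hTmin⟩ := exists_minimal_le_of_wellFoundedLT
    (fun T : Finset ι => T ⊆ S ∧ ∑ i ∈ T, g i = 0 ∧ y ∈ T) T₀ ⟨hT₀S, hT₀, hyT₀⟩
  obtain ⟨hTS, hT0, hyT⟩ := hTmin.prop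
  have hTy : T = {y} := by
    refine eq_singleton_iff_unique_mem.2 ⟨hyT, fun z hz => ?_⟩
    by_contra! hzy
    obtain ⟨U, hUS, hU0, hyU, hzU⟩ :=
      exists_zeroSum_subset_mem_notMem hl hg.ne_zero hS hcard (hTS hz) hy hzy
    have hlt : T ∩ U < T := inter_subset_left.ssubset_of_ne
      fun h => hzU (inter_eq_left.1 h hz)
    exact hTmin.not_prop_of_lt hlt ⟨inter_subset_left.trans hTS,
      hg.sum_inter hTS hUS hT0 hU0, mem_inter.2 ⟨hyT, hyU⟩⟩
  exact hg.ne_zero y hy (by simpa [hTy] using hT0)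

end TorsionFamilies

section Reduction

variable {G : Type*} [AddCommGroup G] {ι : Type*} {g : ι → G} {S : Finset ι}

/-- The cross number of the subfamily of `g` indexed by `S`. -/
noncomputable def crossNumOn (g : ι → G) (S : Finset ι) : ℝ :=
  ∑ i ∈ S, (1 : ℝ) / addOrderOf (g i)

/-- No subfamily with at least two terms can be replaced by its (nonzero) sum without lowering
the cross number. Only reduced families need to be considered for upper bounds on cross
numbers. -/
def IsCrossReduced (g : ι → G) (S : Finset ι) : Prop :=
  ∀ Y ⊆ S, 1 < #Y → ∑ i ∈ Y, g i ≠ 0 → 1 / (addOrderOf (∑ i ∈ Y, g i) : ℝ) < crossNumOn g Y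

variable [DecidableEq ι]

theorem IsInterClosed.merge (hg : IsInterClosed g S) {Y : Finset ι} (hY : Y ⊆ S) {y : ι}
    (hy : y ∈ Y) (hne : ∑ i ∈ Y, g i ≠ 0) :
    IsInterClosed (Function.update g y (∑ i ∈ Y, g i)) (insert y (S \ Y)) := by
  let A (k : ι) : Finset ι := if k = y then Y else {k}
  have sum_A : (fun k => ∑ i ∈ A k, g i) = Function.update g y (∑ i ∈ Y, g i) := by
    funext k
    by_cases hk : k = y <;> simp [A, hk]
  have A_sub (k) (hk : k ∈ insert y (S \ Y)) : A k ⊆ S := by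
    obtain rfl | hk' := mem_insert.1 hk
    · simpa [A] using hY
    · have hky : k ≠ y := fun h => (mem_sdiff.1 hk').2 (h ▸ hy)
      simpa [A, hky] using (mem_sdiff.1 hk').1
  have A_disj : ((insert y (S \ Y) : Finset ι) : Set ι).PairwiseDisjoint A := by
    intro j hj k hk hjk
    by_cases hjy : j = y <;> by_cases hky : k = y <;>
      simp_all [A, Function.onFun]
  have A_ne (k) (hk : k ∈ insert y (S \ Y)) : ∑ i ∈ A k, g i ≠ 0 := by
    by_cases hky : k = y
    · simpa [A, hky] using hne
    · have hkS := sdiff_subset (mem_of_mem_insert_of_ne hk hky)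
      simpa [A, hky] using hg.ne_zero k hkS
  exact sum_A ▸ hg.biUnion A_sub A_disj A_ne

theorem crossNumOn_le_merge {Y : Finset ι} (hY : Y ⊆ S) {y : ι} (hy : y ∈ Y)
    (hle : crossNumOn g Y ≤ 1 / addOrderOf (∑ i ∈ Y, g i)) :
    crossNumOn g S ≤ crossNumOn (Function.update g y (∑ i ∈ Y, g i)) (insert y (S \ Y)) := by
  have hy' : y ∉ S \ Y := fun h => (mem_sdiff.1 h).2 hy
  have hrest : crossNumOn (Function.update g y (∑ i ∈ Y, g i)) (S \ Y) = crossNumOn g (S \ Y) :=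
    sum_congr rfl fun k hk => by
      rw [Function.update_of_ne (ne_of_mem_of_not_mem hk hy')]
  calc crossNumOn g S = crossNumOn g Y + crossNumOn g (S \ Y) := by
        rw [add_comm]; exact (sum_sdiff hY).symm
    _ ≤ 1 / addOrderOf (∑ i ∈ Y, g i) + crossNumOn g (S \ Y) := by gcongr
    _ = _ := by
        rw [← hrest, crossNumOn, crossNumOn, sum_insert hy', Function.update_self]

theorem IsInterClosed.exists_isCrossReduced (hg : IsInterClosed g S) {N : ℕ}
    (hN : ∀ i ∈ S, N • g i = 0) :
    ∃ (g' : ι → G) (S' : Finset ι), IsInterClosed g' S' ∧ IsCrossReduced g' S' ∧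
      (∀ i ∈ S', N • g' i = 0) ∧ crossNumOn g S ≤ crossNumOn g' S' := by
  induction S using Finset.strongInduction generalizing g with
  | H S ih =>
  by_cases hred : IsCrossReduced g S
  · exact ⟨g, S, hg, hred, hN, le_rfl⟩
  simp only [IsCrossReduced, not_forall, not_lt] at hred
  obtain ⟨Y, hY, hcard, hne, hle⟩ := hred
  obtain ⟨y, hy, z, hz, hyz⟩ := one_lt_card.1 hcard
  have hlt : insert y (S \ Y) ⊂ S := by
    refine (insert_subset (hY hy) sdiff_subset).ssubset_of_ne fun h => ?_
    have := h ▸ hY hz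
    simp [hyz.symm, hz] at this
  have hN' (i) (hi : i ∈ insert y (S \ Y)) :
      N • Function.update g y (∑ i ∈ Y, g i) i = 0 := by
    by_cases hiy : i = y
    · rw [hiy, Function.update_self, smul_sum]
      exact sum_eq_zero fun j hj => hN j (hY hj)
    · rw [Function.update_of_ne hiy]
      exact hN i (sdiff_subset (mem_of_mem_insert_of_ne hi hiy))
  obtain ⟨g', S', hg', hred', htor, hle'⟩ := ih _ hlt (hg.merge hY hy hne) hN'
  exact ⟨g', S', hg', hred', htor, (crossNumOn_le_merge hY hy hle).trans hle'⟩

end Reduction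

section OrderFibers

variable {G : Type*} [AddCommGroup G] {ι : Type*} {g : ι → G} {S : Finset ι} {l e N : ℕ}

/-- The indices in `S` of the terms of order `d`. -/
noncomputable def orderFiber (g : ι → G) (S : Finset ι) (d : ℕ) : Finset ι :=
  {i ∈ S | addOrderOf (g i) = d}

theorem orderFiber_subset (d : ℕ) : orderFiber g S d ⊆ S :=
  filter_subset _ _

theorem addOrderOf_of_mem_orderFiber {d : ℕ} {i : ι} (hi : i ∈ orderFiber g S d) :
    addOrderOf (g i) = d :=
  (mem_filter.1 hi).2

theorem crossNumOn_eq_card_div {I : Finset ι} {d : ℕ} (hI : I ⊆ orderFiber g S d) :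
    crossNumOn g I = #I / d := by
  rw [crossNumOn, sum_congr rfl fun i hi => by rw [addOrderOf_of_mem_orderFiber (hI hi)],
    sum_const, nsmul_eq_mul, mul_one_div]

theorem nsmul_ne_zero_of_mem_orderFiber_mul (hl : 1 < l) (he : 0 < e) {i : ι}
    (hi : i ∈ orderFiber g S (l * e)) : e • g i ≠ 0 := fun h => by
  have hle := addOrderOf_le_of_nsmul_eq_zero he h
  rw [addOrderOf_of_mem_orderFiber hi] at hle
  nlinarith

theorem nsmul_nsmul_eq_zero_of_mem_orderFiber_mul {i : ι} (hi : i ∈ orderFiber g S (l * e)) :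
    l • e • g i = 0 := by
  rw [smul_smul, ← addOrderOf_of_mem_orderFiber hi, addOrderOf_nsmul_eq_zero]

theorem crossNumOn_le_of_card_le {I : Finset ι} (hI : I ⊆ orderFiber g S (l * e))
    (hcard : #I ≤ l) : crossNumOn g I ≤ 1 / e :=
  calc crossNumOn g I = #I / (l * e) := by rw [crossNumOn_eq_card_div hI, Nat.cast_mul]
    _ ≤ l / (l * e) := by gcongr
    _ = l / l / e := div_mul_eq_div_div _ _ _
    _ ≤ 1 / e := by gcongr; exact div_self_le_one _

theorem crossNumOn_orderFiber_le_one_sub (hcard : #(orderFiber g S l) + 1 < l) :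
    crossNumOn g (orderFiber g S l) ≤ 1 - 2 / l := by
  have hl : (0 : ℝ) < l := mod_cast (Nat.zero_le _).trans_lt hcard
  have hcard' : (#(orderFiber g S l) : ℝ) + 2 ≤ l := mod_cast hcard
  rw [crossNumOn_eq_card_div subset_rfl, one_sub_div hl.ne']
  gcongr
  linarith

theorem crossNumOn_eq_sum_divisors (hN : N ≠ 0) (hS : ∀ i ∈ S, N • g i = 0) :
    crossNumOn g S = ∑ d ∈ N.divisors, crossNumOn g (orderFiber g S d) :=
  (sum_fiberwise_of_maps_to (fun i hi => Nat.mem_divisors.2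
    ⟨addOrderOf_dvd_of_nsmul_eq_zero (hS i hi), hN⟩) _).symm

-- Otherwise merging `I` would not lower the cross number: its sum has order at most `e`.
theorem IsCrossReduced.sum_eq_zero_of_card_le (hg : IsCrossReduced g S) (hl : 1 < l)
    (he : 0 < e) {I : Finset ι} (hI : I ⊆ orderFiber g S (l * e)) (hcard : #I ≤ l)
    (h0 : ∑ i ∈ I, e • g i = 0) : ∑ i ∈ I, g i = 0 := by
  by_contra hne
  obtain ⟨a, rfl⟩ | hI' := (nonempty_of_sum_ne_zero hne).exists_eq_singleton_or_nontrivial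
  · exact nsmul_ne_zero_of_mem_orderFiber_mul hl he (hI (mem_singleton_self a))
      (by simpa using h0)
  have htor : e • ∑ i ∈ I, g i = 0 := by rw [smul_sum, h0]
  have hpos : 0 < addOrderOf (∑ i ∈ I, g i) :=
    addOrderOf_pos_iff.2 (isOfFinAddOrder_iff_nsmul_eq_zero.2 ⟨e, he, htor⟩)
  refine (hg I (hI.trans (orderFiber_subset _)) (one_lt_card_iff_nontrivial.2 hI') hne).not_ge ?_
  exact (crossNumOn_le_of_card_le hI hcard).trans <| one_div_le_one_div_of_le
    (mod_cast hpos) (mod_cast addOrderOf_le_of_nsmul_eq_zero he htor)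

variable [Finite G] [IsAddCyclic G]

theorem IsCrossReduced.sum_eq_zero_of_sum_nsmul_eq_zero (hg : IsCrossReduced g S)
    (hl : l.Prime) (he : 0 < e) {I : Finset ι} (hI : I ⊆ orderFiber g S (l * e))
    (h0 : ∑ i ∈ I, e • g i = 0) : ∑ i ∈ I, g i = 0 := by
  classical
  induction I using Finset.strongInduction with
  | H I ih =>
  obtain hcard | hcard := le_or_gt #I l
  · exact hg.sum_eq_zero_of_card_le hl.one_lt he hI hcard h0
  obtain ⟨x, hx, y, hy, hxy⟩ := one_lt_card.1 (hl.one_lt.trans hcard)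
  obtain ⟨T, hTI, hT0, hyT, hxT⟩ := exists_zeroSum_subset_mem_notMem (g := fun i => e • g i) hl
    (fun i hi => nsmul_ne_zero_of_mem_orderFiber_mul hl.one_lt he (hI hi))
    (fun i hi => nsmul_nsmul_eq_zero_of_mem_orderFiber_mul (hI hi)) hcard hx hy hxy
  have hrest : ∑ i ∈ I \ T, e • g i = 0 := by rw [sum_sdiff_eq_sub hTI, h0, hT0, sub_zero]
  rw [← sum_sdiff hTI, ih T (hTI.ssubset_of_ne fun h => hxT (h ▸ hx)) (hTI.trans hI) hT0,
    ih (I \ T) (sdiff_ssubset hTI ⟨y, hyT⟩) (sdiff_subset.trans hI) hrest, add_zero]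

theorem IsInterClosed.card_orderFiber_le [DecidableEq ι] (hg : IsInterClosed g S)
    (hred : IsCrossReduced g S) (hl : l.Prime) (he : 0 < e) : #(orderFiber g S (l * e)) ≤ l := by
  have closed : IsInterClosed (fun i => e • g i) (orderFiber g S (l * e)) := by
    refine ⟨fun i hi => nsmul_ne_zero_of_mem_orderFiber_mul hl.one_lt he hi,
      fun I hI J hJ hI0 hJ0 => ?_⟩
    rw [← smul_sum, hg.sum_inter (hI.trans (orderFiber_subset _))
      (hJ.trans (orderFiber_subset _)) (hred.sum_eq_zero_of_sum_nsmul_eq_zero hl he hI hI0)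
      (hred.sum_eq_zero_of_sum_nsmul_eq_zero hl he hJ hJ0), smul_zero]
  exact closed.card_le hl fun i hi => nsmul_nsmul_eq_zero_of_mem_orderFiber_mul hi

theorem IsInterClosed.crossNumOn_orderFiber_le [DecidableEq ι] (hg : IsInterClosed g S)
    (hred : IsCrossReduced g S) (hl : l.Prime) (he : 0 < e) :
    crossNumOn g (orderFiber g S (l * e)) ≤ 1 / e :=
  crossNumOn_le_of_card_le subset_rfl (hg.card_orderFiber_le hred hl he)

end OrderFibers

section Projection

variable {G : Type*} [AddCommGroup G] {ι : Type*} {g : ι → G} {S : Finset ι} {l : ℕ}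

theorem crossNumOn_le_crossNumOn_nsmul [Finite G] (l : ℕ) (g : ι → G) (S : Finset ι) :
    crossNumOn g S ≤ crossNumOn (fun i => l • g i) S :=
  sum_le_sum fun _ _ => one_div_le_one_div_of_le (mod_cast addOrderOf_pos _)
    (mod_cast Nat.le_of_dvd (addOrderOf_pos _) (addOrderOf_smul_dvd l))

variable [Finite G] [IsAddCyclic G] [DecidableEq ι]

theorem IsInterClosed.exists_sum_union_orderFiber_eq_zero (hg : IsInterClosed g S)
    (hl : l.Prime) (hcard : l ≤ #(orderFiber g S l) + 1) {I : Finset ι}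
    (hI : I ⊆ S \ orderFiber g S l) (h0 : ∑ i ∈ I, l • g i = 0) :
    ∃ J ⊆ orderFiber g S l, ∑ i ∈ I ∪ J, g i = 0 := by
  obtain ⟨J, hJ, hsum⟩ := exists_sum_eq_of_nsmul_eq_zero hl
    (fun i hi => hg.ne_zero i (orderFiber_subset l hi : i ∈ S))
    (fun i hi => by rw [← addOrderOf_of_mem_orderFiber hi, addOrderOf_nsmul_eq_zero]) hcard
    (x := -∑ i ∈ I, g i) (by rw [smul_neg, smul_sum, h0, neg_zero])
  refine ⟨J, hJ, ?_⟩
  rw [sum_union (disjoint_of_subset_left hI (disjoint_of_subset_right hJ sdiff_disjoint)), hsum,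
    add_neg_cancel]

theorem IsInterClosed.nsmul_sdiff_orderFiber (hg : IsInterClosed g S) (hl : l.Prime)
    (hcard : l ≤ #(orderFiber g S l) + 1) :
    IsInterClosed (fun i => l • g i) (S \ orderFiber g S l) := by
  set W := orderFiber g S l
  have hWS : W ⊆ S := orderFiber_subset l
  refine ⟨fun i hi h0 => ?_, fun I hI J hJ hI0 hJ0 => ?_⟩
  · obtain ⟨hiS, hiW⟩ := mem_sdiff.1 hi
    have := Fact.mk hl
    exact hiW (mem_filter.2 ⟨hiS, addOrderOf_eq_prime h0 (hg.ne_zero i hiS)⟩)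
  · obtain ⟨A, hA, hIA⟩ := hg.exists_sum_union_orderFiber_eq_zero hl hcard hI hI0
    obtain ⟨B, hB, hJB⟩ := hg.exists_sum_union_orderFiber_eq_zero hl hcard hJ hJ0
    have hsum := hg.sum_inter (union_subset (hI.trans sdiff_subset) (hA.trans hWS))
      (union_subset (hJ.trans sdiff_subset) (hB.trans hWS)) hIA hJB
    have inter_sub : I ∩ J ⊆ (I ∪ A) ∩ (J ∪ B) := by gcongr <;> exact subset_union_left
    have mem_W (i) (hi : i ∈ (I ∪ A) ∩ (J ∪ B)) (hi' : i ∉ I ∩ J) : i ∈ W := by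
      simp only [mem_inter, mem_union] at hi hi'
      have := @hA i
      have := @hB i
      tauto
    rw [sum_subset inter_sub fun i hi hi' => ?_, ← smul_sum, hsum, smul_zero]
    rw [← addOrderOf_of_mem_orderFiber (mem_W i hi hi'), addOrderOf_nsmul_eq_zero]

theorem IsInterClosed.crossNumOn_le_nsmul_add_one (hg : IsInterClosed g S)
    (hred : IsCrossReduced g S) (hl : l.Prime) :
    crossNumOn g S ≤ crossNumOn (fun i => l • g i) (S \ orderFiber g S l) + 1 := by
  have hfiber : crossNumOn g (orderFiber g S l) ≤ 1 := by
    simpa using hg.crossNumOn_orderFiber_le hred hl one_pos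
  calc crossNumOn g S = crossNumOn g (S \ orderFiber g S l) + crossNumOn g (orderFiber g S l) :=
        (sum_sdiff (orderFiber_subset l)).symm
    _ ≤ _ := add_le_add (crossNumOn_le_crossNumOn_nsmul l g _) hfiber

end Projection

section DivisorSums

/-- The value `K₁*(C_{p^m}) = 1 + 1/p + ⋯ + 1/p^(m-1)`. -/
noncomputable def kStar (p m : ℕ) : ℝ :=
  ∑ j ∈ range m, 1 / (p : ℝ) ^ j

variable {p m : ℕ}

theorem kStar_mul_sub_one (hp : p ≠ 0) (m : ℕ) :
    kStar p m * (p - 1) = p - p / (p : ℝ) ^ m := by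
  have : (p : ℝ) ≠ 0 := mod_cast hp
  induction m with
  | zero => simp [kStar]
  | succ m ih =>
    rw [kStar, sum_range_succ, ← kStar, add_mul, ih]
    field_simp
    ring

theorem kStar_eq (hp : 1 < p) (hm : 1 ≤ m) :
    kStar p m = ((p : ℝ) ^ m - 1) / ((p : ℝ) ^ m - (p : ℝ) ^ (m - 1)) := by
  obtain ⟨m, rfl⟩ := Nat.exists_eq_add_of_le' hm
  have hp1 : (1 : ℝ) < p := mod_cast hp
  rw [eq_div_iff, add_tsub_cancel_right]
  · calc kStar p (m + 1) * ((p : ℝ) ^ (m + 1) - (p : ℝ) ^ m)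
        = kStar p (m + 1) * (p - 1) * (p : ℝ) ^ m := by ring
      _ = (p : ℝ) ^ (m + 1) - 1 := by
        rw [kStar_mul_sub_one (by lia), pow_succ']
        field_simp
  · rw [sub_ne_zero]
    exact (pow_lt_pow_right₀ hp1 (by simp)).ne'

theorem kStar_le (hp : 1 < p) (m : ℕ) : kStar p m ≤ p / (p - 1) := by
  have hp1 : (1 : ℝ) < p := mod_cast hp
  rw [le_div_iff₀ (by linarith), kStar_mul_sub_one (by lia)]
  exact sub_le_self _ (by positivity)

theorem kStar_le_two (hp : 1 < p) (m : ℕ) : kStar p m ≤ 2 := by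
  have hp2 : (2 : ℝ) ≤ p := mod_cast hp
  refine (kStar_le hp m).trans ?_
  rw [div_le_iff₀ (by linarith)]
  linarith

theorem sum_divisors_mul_prime (F : ℕ → ℝ) {N q : ℕ} (hq : q.Prime) (hN : N.Coprime q) :
    ∑ d ∈ (N * q).divisors, F d = ∑ d ∈ N.divisors, F d + ∑ d ∈ N.divisors, F (d * q) := by
  rw [Nat.divisors_mul, mul_def, sum_image hN.mul_injOn_divisors, sum_product, ← sum_add_distrib]
  refine sum_congr rfl fun d _ => ?_
  rw [hq.sum_divisors, mul_one, add_comm]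

theorem sum_divisors_prime_pow_le {F : ℕ → ℝ} {c : ℝ} (hp : p.Prime)
    (hF : ∀ j, F (p ^ (j + 1)) ≤ c / (p : ℝ) ^ j) :
    ∑ d ∈ (p ^ m).divisors, F d ≤ F 1 + c * kStar p m := by
  rw [Nat.sum_divisors_prime_pow hp, sum_range_succ', pow_zero, add_comm, kStar, mul_sum]
  gcongr with j
  rw [mul_one_div]
  exact hF j

end DivisorSums

section UpperBounds

variable {G : Type*} [AddCommGroup G]
variable {ι : Type*} [DecidableEq ι] {g : ι → G} {S : Finset ι} {r p q m : ℕ}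

theorem IsInterClosed.crossNumOn_orderFiber_one (hg : IsInterClosed g S) :
    crossNumOn g (orderFiber g S 1) = 0 := by
  have hempty : orderFiber g S 1 = ∅ := filter_eq_empty_iff.2 fun i hi =>
    AddMonoid.addOrderOf_eq_one_iff.not.2 (hg.ne_zero i hi)
  rw [hempty, crossNumOn, sum_empty]

variable [Finite G] [IsAddCyclic G]

theorem IsInterClosed.sum_crossNumOn_orderFiber_le (hg : IsInterClosed g S)
    (hred : IsCrossReduced g S) (hp : p.Prime) :
    ∑ d ∈ (p ^ m).divisors, crossNumOn g (orderFiber g S d) ≤ kStar p m := by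
  have h := sum_divisors_prime_pow_le (F := fun d => crossNumOn g (orderFiber g S d)) (c := 1)
    (m := m) hp fun j => by
      simpa [pow_succ'] using hg.crossNumOn_orderFiber_le hred hp (pow_pos hp.pos j)
  simpa [hg.crossNumOn_orderFiber_one] using h

theorem IsInterClosed.sum_crossNumOn_orderFiber_mul_le (hg : IsInterClosed g S)
    (hred : IsCrossReduced g S) (hp : p.Prime) (hq : 0 < q) :
    ∑ d ∈ (p ^ m).divisors, crossNumOn g (orderFiber g S (d * q)) ≤
      crossNumOn g (orderFiber g S q) + 1 / q * kStar p m := by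
  have h := sum_divisors_prime_pow_le (F := fun d => crossNumOn g (orderFiber g S (d * q)))
    (c := 1 / q) (m := m) hp fun j => by
      rw [pow_succ', mul_assoc, div_div, ← Nat.cast_pow, ← Nat.cast_mul, mul_comm q]
      exact hg.crossNumOn_orderFiber_le hred hp (mul_pos (pow_pos hp.pos j) hq)
  simpa using h

theorem IsInterClosed.sum_crossNumOn_orderFiber_mul_prime_le (hg : IsInterClosed g S)
    (hred : IsCrossReduced g S) (hp : p.Prime) (hr : r.Prime) (hq : 0 < q) :
    ∑ d ∈ (p ^ m).divisors, crossNumOn g (orderFiber g S (d * (q * r))) ≤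
      crossNumOn g (orderFiber g S (q * r)) + 1 / (p * q) * kStar p m := by
  have h := sum_divisors_prime_pow_le (F := fun d => crossNumOn g (orderFiber g S (d * (q * r))))
    (c := 1 / (p * q)) (m := m) hp fun j => by
      calc _ = crossNumOn g (orderFiber g S (r * (p ^ (j + 1) * q))) := by
            rw [mul_comm r, mul_assoc]
        _ ≤ 1 / (p ^ (j + 1) * q : ℕ) :=
            hg.crossNumOn_orderFiber_le hred hr (mul_pos (pow_pos hp.pos _) hq)
        _ = 1 / (p * q) / p ^ j := by
            push_cast
            rw [div_div]
            ring
  simpa using h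

theorem IsInterClosed.crossNumOn_le_kStar (hg : IsInterClosed g S) (hp : p.Prime)
    (hS : ∀ i ∈ S, p ^ m • g i = 0) : crossNumOn g S ≤ kStar p m := by
  obtain ⟨g', S', hg', hred, htor, hle⟩ := hg.exists_isCrossReduced hS
  refine hle.trans ?_
  rw [crossNumOn_eq_sum_divisors (pow_ne_zero m hp.ne_zero) htor]
  exact hg'.sum_crossNumOn_orderFiber_le hred hp

theorem IsInterClosed.crossNumOn_le_kStar_add_one (hg : IsInterClosed g S) (hp : p.Prime)
    (hq : q.Prime) (hpq : p ≠ q) (hS : ∀ i ∈ S, (p ^ m * q) • g i = 0) :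
    crossNumOn g S ≤ kStar p m + 1 := by
  obtain ⟨g', S', hg', hred, htor, hle⟩ := hg.exists_isCrossReduced hS
  refine hle.trans ?_
  obtain hcard | hcard := le_or_gt q (#(orderFiber g' S' q) + 1)
  · have hproj := (hg'.nsmul_sdiff_orderFiber hq hcard).crossNumOn_le_kStar (m := m) hp
      fun i hi => by rw [smul_smul, htor i (sdiff_subset hi)]
    linarith [hg'.crossNumOn_le_nsmul_add_one hred hq]
  · have hcop : (p ^ m).Coprime q := ((Nat.coprime_primes hp hq).2 hpq).pow_left m
    rw [crossNumOn_eq_sum_divisors (mul_ne_zero (pow_ne_zero m hp.ne_zero) hq.ne_zero) htor,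
      sum_divisors_mul_prime _ hq hcop]
    have hw_q := crossNumOn_orderFiber_le_one_sub hcard
    have hsum := hg'.sum_crossNumOn_orderFiber_le (m := m) hred hp
    have hsum_q := hg'.sum_crossNumOn_orderFiber_mul_le (m := m) hred hp hq.pos
    have hkStar : 1 / q * kStar p m ≤ 2 / q := by
      rw [one_div_mul_eq_div]
      gcongr
      exact kStar_le_two hp.one_lt m
    linarith

theorem kStar_mul_le (hr : r ≠ 0) (hrp : r < p) (hq : 2 ≤ q) (m : ℕ) :
    1 / p * kStar p m + 1 / q * kStar p m + 1 / (p * q) * kStar p m ≤ 2 / r + 1 / q := by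
  have hr0 : (0 : ℝ) < r := by positivity
  have hrp' : (r : ℝ) + 1 ≤ p := mod_cast hrp
  have hq2 : (2 : ℝ) ≤ q := mod_cast hq
  have hp1 : (0 : ℝ) < p - 1 := by linarith
  have hinv : 1 / ((p : ℝ) - 1) ≤ 1 / r := one_div_le_one_div_of_le hr0 (by linarith)
  calc 1 / p * kStar p m + 1 / q * kStar p m + 1 / (p * q) * kStar p m
      = (1 / p + 1 / q + 1 / (p * q)) * kStar p m := by ring
    _ ≤ (1 / p + 1 / q + 1 / (p * q)) * (p / (p - 1)) := by
        gcongr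
        exact kStar_le (by lia) m
    _ = 1 / (p - 1) * (1 + 2 / q) + 1 / q := by
        have : (p : ℝ) ≠ 0 := by linarith
        field_simp
        ring
    _ ≤ 1 / r * (1 + 1) + 1 / q := by
        gcongr
        exact (div_le_one (by linarith)).2 hq2
    _ = 2 / r + 1 / q := by ring

theorem IsInterClosed.crossNumOn_le_kStar_add_two_of_card_lt (hg : IsInterClosed g S)
    (hred : IsCrossReduced g S) (hr : r.Prime) (hp : p.Prime) (hq : q.Prime) (hrp : r < p)
    (hrq : r < q) (hpq : p ≠ q) (hS : ∀ i ∈ S, (p ^ m * q * r) • g i = 0)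
    (hcard_q : #(orderFiber g S q) + 1 < q) (hcard_r : #(orderFiber g S r) + 1 < r) :
    crossNumOn g S ≤ kStar p m + 2 := by
  have hcop_q : (p ^ m).Coprime q := ((Nat.coprime_primes hp hq).2 hpq).pow_left m
  have hcop_r : (p ^ m * q).Coprime r := Nat.Coprime.mul_left
    (((Nat.coprime_primes hp hr).2 hrp.ne').pow_left m) ((Nat.coprime_primes hq hr).2 hrq.ne')
  rw [crossNumOn_eq_sum_divisors (by simp [hp.ne_zero, hq.ne_zero, hr.ne_zero]) hS,
    sum_divisors_mul_prime _ hr hcop_r, sum_divisors_mul_prime _ hq hcop_q,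
    sum_divisors_mul_prime _ hq hcop_q]
  simp only [mul_assoc]
  have hw_q := crossNumOn_orderFiber_le_one_sub hcard_q
  have hw_r := crossNumOn_orderFiber_le_one_sub hcard_r
  have hw_qr : crossNumOn g (orderFiber g S (q * r)) ≤ 1 / q := by
    rw [mul_comm]
    exact hg.crossNumOn_orderFiber_le hred hr hq.pos
  have hsum := hg.sum_crossNumOn_orderFiber_le (m := m) hred hp
  have hsum_q := hg.sum_crossNumOn_orderFiber_mul_le (m := m) hred hp hq.pos
  have hsum_r := hg.sum_crossNumOn_orderFiber_mul_prime_le (m := m) hred hp hr one_pos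
  have hsum_qr := hg.sum_crossNumOn_orderFiber_mul_prime_le (m := m) hred hp hr hq.pos
  simp only [one_mul, Nat.cast_one, mul_one] at hsum_r
  have two_div : (2 : ℝ) / q = 1 / q + 1 / q := by ring
  linarith [kStar_mul_le hr.ne_zero hrp hq.two_le m]

theorem IsInterClosed.crossNumOn_le_kStar_add_two (hg : IsInterClosed g S) (hr : r.Prime)
    (hp : p.Prime) (hq : q.Prime) (hrp : r < p) (hrq : r < q) (hpq : p ≠ q)
    (hS : ∀ i ∈ S, (p ^ m * q * r) • g i = 0) : crossNumOn g S ≤ kStar p m + 2 := by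
  obtain ⟨g', S', hg', hred, htor, hle⟩ := hg.exists_isCrossReduced hS
  refine hle.trans ?_
  obtain hcard_r | hcard_r := le_or_gt r (#(orderFiber g' S' r) + 1)
  · have hproj := (hg'.nsmul_sdiff_orderFiber hr hcard_r).crossNumOn_le_kStar_add_one (m := m)
      hp hq hpq fun i hi => by rw [smul_smul, htor i (sdiff_subset hi)]
    linarith [hg'.crossNumOn_le_nsmul_add_one hred hr]
  obtain hcard_q | hcard_q := le_or_gt q (#(orderFiber g' S' q) + 1)
  · have hproj := (hg'.nsmul_sdiff_orderFiber hq hcard_q).crossNumOn_le_kStar_add_one (m := m)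
      hp hr hrp.ne' fun i hi => by rw [smul_smul, mul_right_comm, htor i (sdiff_subset hi)]
    linarith [hg'.crossNumOn_le_nsmul_add_one hred hq]
  exact hg'.crossNumOn_le_kStar_add_two_of_card_lt hred hr hp hq hrp hrq hpq htor hcard_q hcard_r

end UpperBounds

section LowerBound

variable {G H : Type*} [AddCommGroup G] [AddCommGroup H] {ι κ : Type*}

theorem eq_empty_or_eq_of_sum_const_eq_zero {x : G} {T : Finset κ} (hT : addOrderOf x = #T)
    {I : Finset κ} (hI : I ⊆ T) (h0 : ∑ _i ∈ I, x = 0) : I = ∅ ∨ I = T := by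
  rw [sum_const, ← addOrderOf_dvd_iff_nsmul_eq_zero, hT] at h0
  refine I.eq_empty_or_nonempty.imp_right fun hne => ?_
  exact eq_of_subset_of_card_le hI (Nat.le_of_dvd hne.card_pos h0)

variable [DecidableEq ι] [DecidableEq κ]

theorem isInterClosed_const {x : G} (hx : x ≠ 0) {T : Finset κ} (hT : addOrderOf x = #T) :
    IsInterClosed (fun _ => x) T := by
  refine ⟨fun _ _ => hx, fun I hI J hJ hI0 hJ0 => ?_⟩
  obtain rfl | rfl := eq_empty_or_eq_of_sum_const_eq_zero hT hI hI0
  · simp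
  · rwa [inter_eq_right.2 hJ]

-- Applying `φ` kills `g`, so a zero-sum subfamily of the concatenation splits into a zero-sum
-- subfamily of `u` and one of `g`.
theorem IsInterClosed.sumElim {φ : G →+ H} {g : ι → G} {u : κ → G} {S : Finset ι}
    {T : Finset κ} (hg : IsInterClosed g S) (hgφ : ∀ i ∈ S, φ (g i) = 0)
    (hu : IsInterClosed (φ ∘ u) T)
    (hlift : ∀ J ⊆ T, ∑ j ∈ J, φ (u j) = 0 → ∑ j ∈ J, u j = 0) :
    IsInterClosed (Sum.elim g u) (S.disjSum T) := by
  have sum_eq (I : Finset (ι ⊕ κ)) :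
      ∑ i ∈ I, Sum.elim g u i = ∑ i ∈ I.toLeft, g i + ∑ j ∈ I.toRight, u j := by
    rw [← sum_sumElim, toLeft_disjSum_toRight]
  have toLeft_sub {I : Finset (ι ⊕ κ)} (hI : I ⊆ S.disjSum T) : I.toLeft ⊆ S := fun i hi =>
    inl_mem_disjSum.1 (hI (mem_toLeft.1 hi))
  have toRight_sub {I : Finset (ι ⊕ κ)} (hI : I ⊆ S.disjSum T) : I.toRight ⊆ T := fun i hi =>
    inr_mem_disjSum.1 (hI (mem_toRight.1 hi))
  have right_zero {I : Finset (ι ⊕ κ)} (hI : I ⊆ S.disjSum T)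
      (h0 : ∑ i ∈ I, Sum.elim g u i = 0) : ∑ j ∈ I.toRight, φ (u j) = 0 := by
    have h := congrArg φ h0
    rwa [sum_eq, map_add, map_sum, map_sum, map_zero,
      sum_eq_zero fun i hi => hgφ i (toLeft_sub hI hi), zero_add] at h
  have left_zero {I : Finset (ι ⊕ κ)} (hI : I ⊆ S.disjSum T)
      (h0 : ∑ i ∈ I, Sum.elim g u i = 0) : ∑ i ∈ I.toLeft, g i = 0 := by
    have h := hlift _ (toRight_sub hI) (right_zero hI h0)
    rwa [sum_eq, h, add_zero] at h0
  refine ⟨fun i hi => ?_, fun I hI J hJ hI0 hJ0 => ?_⟩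
  · obtain i | j := i
    · exact hg.ne_zero i (inl_mem_disjSum.1 hi)
    · exact fun h => hu.ne_zero j (inr_mem_disjSum.1 hi) (by simpa using congrArg φ h)
  · have hleft := hg.sum_inter (toLeft_sub hI) (toLeft_sub hJ) (left_zero hI hI0)
      (left_zero hJ hJ0)
    have hright := hu.sum_inter (toRight_sub hI) (toRight_sub hJ) (right_zero hI hI0)
      (right_zero hJ hJ0)
    rw [sum_eq, toLeft_inter, toRight_inter, hleft, zero_add]
    exact hlift _ (inter_subset_left.trans (toRight_sub hI)) hright

theorem IsInterClosed.sumElim_of_map_eq {φ : G →+ H} {g : ι → G} {u : κ → G} {S : Finset ι}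
    {T : Finset κ} {x : H} (hg : IsInterClosed g S) (hgφ : ∀ i ∈ S, φ (g i) = 0) (hx : x ≠ 0)
    (hT : addOrderOf x = #T) (hu : ∀ j, φ (u j) = x) (hu0 : ∑ j ∈ T, u j = 0) :
    IsInterClosed (Sum.elim g u) (S.disjSum T) := by
  have hφu : φ ∘ u = fun _ => x := funext hu
  refine hg.sumElim hgφ (hφu ▸ isInterClosed_const hx hT) fun J hJ hJ0 => ?_
  have hJx : ∑ _j ∈ J, x = 0 := (sum_congr rfl fun j _ => (hu j).symm).trans hJ0
  obtain rfl | rfl := eq_empty_or_eq_of_sum_const_eq_zero hT hJ hJx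
  exacts [sum_empty, hu0]

/-- Some UFIM over the nonzero `N`-torsion of `G` has cross number `x`. -/
def AttainsCrossNum (G : Type*) [AddCommGroup G] (N : ℕ) (x : ℝ) : Prop :=
  ∃ (n : ℕ) (g : Fin n → G), IsUFIM g ∧ (∀ i, N • g i = 0) ∧ crossNum g = x

theorem IsInterClosed.attainsCrossNum [Fintype ι] {g : ι → G} {N : ℕ}
    (hg : IsInterClosed g univ) (h0 : ∑ i, g i = 0) (hN : ∀ i, N • g i = 0) :
    AttainsCrossNum G N (crossNumOn g univ) := by
  let σ := (Fintype.equivFin ι).symm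
  refine ⟨Fintype.card ι, g ∘ σ, ?_, fun i => hN (σ i), ?_⟩
  · exact (hg.comp_injective σ.injective fun _ _ => mem_univ _).isUFIM ((σ.sum_comp g).trans h0)
  · exact σ.sum_comp fun i => (1 : ℝ) / addOrderOf (g i)

theorem attainsCrossNum_one_zero : AttainsCrossNum G 1 0 := by
  have closed : IsInterClosed (Empty.elim : Empty → G) univ :=
    ⟨fun i => i.elim, fun I _ J _ _ _ => by simp [eq_empty_of_isEmpty]⟩
  simpa [crossNumOn] using closed.attainsCrossNum (N := 1) (by simp) fun i => i.elim

-- The family `h, …, h, h - l • h`.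
theorem exists_fin_sum_eq_zero {l e N : ℕ} (hl : l.Prime) {h : G}
    (hord : addOrderOf h = l ^ (e + 1)) (hNl : (N * l) • h = 0) :
    ∃ u : Fin l → G, ∑ j, u j = 0 ∧ (∀ j, N • u j = N • h) ∧
      ∀ j, addOrderOf (u j) = l ^ (e + 1) := by
  have : NeZero l := ⟨hl.ne_zero⟩
  have hsub : addOrderOf (h - l • h) = l ^ (e + 1) := by
    have hcop : (l ^ (e + 1)).Coprime (l - 1) :=
      ((Nat.coprime_self_sub_right hl.one_le).2 (Nat.coprime_one_right l)).pow_left _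
    have heq : l • h - h = (l - 1) • h := by
      rw [sub_nsmul h hl.one_le, one_nsmul, sub_eq_add_neg]
    rw [← addOrderOf_neg, neg_sub, heq, Nat.Coprime.addOrderOf_nsmul (hord ▸ hcop), hord]
  refine ⟨fun j => h - if j = 0 then l • h else 0, ?_, fun j => ?_, fun j => ?_⟩
  · simp [sum_sub_distrib]
  · dsimp only
    split_ifs
    · rw [smul_sub, smul_smul, hNl, sub_zero]
    · rw [sub_zero]
  · dsimp only
    split_ifs
    · exact hsub
    · rw [sub_zero, hord]

theorem AttainsCrossNum.mul_prime {N l e : ℕ} {x : ℝ} (hx : AttainsCrossNum G N x)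
    (hl : l.Prime) {h : G} (hord : addOrderOf h = l ^ (e + 1)) (hN : N • h ≠ 0)
    (hNl : (N * l) • h = 0) : AttainsCrossNum G (N * l) (x + 1 / (l : ℝ) ^ e) := by
  obtain ⟨n, g, hg, htor, rfl⟩ := hx
  obtain ⟨u, hu0, huN, huord⟩ := exists_fin_sum_eq_zero hl hord hNl
  have := Fact.mk hl
  have hNh : addOrderOf (N • h) = #(univ : Finset (Fin l)) := by
    rw [card_fin]
    exact addOrderOf_eq_prime (by rw [smul_smul, mul_comm, hNl]) hN
  have closed : IsInterClosed (Sum.elim g u) univ := by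
    rw [← univ_disjSum_univ]
    exact hg.isInterClosed.sumElim_of_map_eq (φ := nsmulAddMonoidHom N) (fun i _ => htor i) hN hNh
      huN hu0
  have hsum : ∑ i, Sum.elim g u i = 0 := by
    simp [Fintype.sum_sum_type, hg.sum_eq_zero, hu0]
  have htor' : ∀ i, (N * l) • Sum.elim g u i = 0
    | .inl i => by rw [Sum.elim_inl, mul_comm, mul_smul, htor, smul_zero]
    | .inr j => by rw [Sum.elim_inr, mul_comm, mul_smul, huN, smul_smul, mul_comm, hNl]
  convert closed.attainsCrossNum hsum htor' using 1
  have hl0 : (l : ℝ) ≠ 0 := mod_cast hl.ne_zero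
  simp only [crossNumOn, crossNum, Fintype.sum_sum_type, Sum.elim_inl, Sum.elim_inr, huord,
    sum_const, card_fin, nsmul_eq_mul, Nat.cast_pow]
  field_simp
  ring

variable [Finite G] [IsAddCyclic G]

theorem exists_addOrderOf_eq_of_dvd_card {d : ℕ} (hd : d ∣ Nat.card G) :
    ∃ h : G, addOrderOf h = d := by
  obtain ⟨x, hx⟩ := IsAddCyclic.exists_ofOrder_eq_natCard (α := G)
  obtain ⟨k, hk⟩ := hd
  have hdk : d * k ≠ 0 := hk ▸ Nat.card_pos.ne'
  refine ⟨k • x, ?_⟩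
  rw [addOrderOf_nsmul_of_dvd (right_ne_zero_of_mul hdk) (hx ▸ hk ▸ dvd_mul_left k d), hx, hk,
    Nat.mul_div_cancel _ (Nat.pos_of_ne_zero (right_ne_zero_of_mul hdk))]

theorem AttainsCrossNum.mul_prime_pow {M l m : ℕ} {x : ℝ} (hx : AttainsCrossNum G M x)
    (hl : l.Prime) (hM : ¬l ∣ M) (hm : l ^ m ∣ Nat.card G) :
    AttainsCrossNum G (M * l ^ m) (x + kStar l m) := by
  induction m with
  | zero => simpa [kStar] using hx
  | succ m ih =>
    obtain ⟨h, hord⟩ := exists_addOrderOf_eq_of_dvd_card hm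
    have hne : (M * l ^ m) • h ≠ 0 := fun h0 => hM <| by
      have hdvd := addOrderOf_dvd_of_nsmul_eq_zero h0
      rw [hord, pow_succ'] at hdvd
      exact Nat.dvd_of_mul_dvd_mul_right (pow_pos hl.pos m) hdvd
    have hzero : (M * l ^ m * l) • h = 0 := by
      rw [mul_assoc, ← pow_succ, mul_smul, ← hord, addOrderOf_nsmul_eq_zero, smul_zero]
    have attains := (ih ((pow_dvd_pow l m.le_succ).trans hm)).mul_prime hl hord hne hzero
    rwa [mul_assoc, ← pow_succ, add_assoc, kStar, ← sum_range_succ] at attains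

theorem attainsCrossNum_kStar_add_two {r p q m : ℕ} (hr : r.Prime) (hp : p.Prime)
    (hq : q.Prime) (hrp : r ≠ p) (hrq : r ≠ q) (hpq : p ≠ q)
    (hG : r * p ^ m * q ∣ Nat.card G) : AttainsCrossNum G (r * p ^ m * q) (kStar p m + 2) := by
  have kStar_one (l : ℕ) : kStar l 1 = 1 := by simp [kStar]
  have hpr : ¬p ∣ r := fun h => hrp ((Nat.prime_dvd_prime_iff_eq hp hr).1 h).symm
  have hqr : ¬q ∣ r := fun h => hrq ((Nat.prime_dvd_prime_iff_eq hq hr).1 h).symm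
  have hqp : ¬q ∣ p ^ m := fun h =>
    hpq ((Nat.prime_dvd_prime_iff_eq hq hp).1 (hq.dvd_of_dvd_pow h)).symm
  have hr_card : r ^ 1 ∣ Nat.card G := by
    rw [pow_one]; exact (dvd_mul_right r _).trans (dvd_of_mul_right_dvd hG)
  have hp_card : p ^ m ∣ Nat.card G := (dvd_mul_left _ r).trans (dvd_of_mul_right_dvd hG)
  have hq_card : q ^ 1 ∣ Nat.card G := by rw [pow_one]; exact dvd_of_mul_left_dvd hG
  have attains_r : AttainsCrossNum G r 1 := by
    simpa [kStar_one] using attainsCrossNum_one_zero.mul_prime_pow hr hr.not_dvd_one hr_card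
  have attains_q := (attains_r.mul_prime_pow hp hpr hp_card).mul_prime_pow hq
    (hq.dvd_mul.not.2 (not_or.2 ⟨hqr, hqp⟩)) hq_card
  rw [pow_one, kStar_one] at attains_q
  convert attains_q using 1
  ring

end LowerBound

theorem K1_rpmq_general {G : Type*} [AddCommGroup G] [IsAddCyclic G] {r p q m : ℕ}
    (hr : r.Prime) (hp : p.Prime) (hq : q.Prime) (hrp : r < p) (hrq : r < q) (hpq : p ≠ q)
    (hm : 1 ≤ m) (hG : Nat.card G = r * p ^ m * q) :
    K1 G = 2 + ((p : ℝ) ^ m - 1) / ((p : ℝ) ^ m - (p : ℝ) ^ (m - 1)) := by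
  have hcard : r * p ^ m * q ≠ 0 := by simp [hr.ne_zero, hp.ne_zero, hq.ne_zero]
  have : Finite G := Nat.finite_of_card_ne_zero (hG ▸ hcard)
  rw [← kStar_eq hp.one_lt hm, add_comm]
  refine IsGreatest.csSup_eq ⟨?_, ?_⟩
  · obtain ⟨n, g, hg, -, hx⟩ :=
      attainsCrossNum_kStar_add_two hr hp hq hrp.ne hrq.ne hpq hG.symm.dvd
    exact ⟨n, g, hg, hx⟩
  · rintro _ ⟨n, g, hg, rfl⟩
    have htor (i : Fin n) : (p ^ m * q * r) • g i = 0 := by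
      rw [mul_comm, ← mul_assoc, ← hG, card_nsmul_eq_zero']
    exact hg.isInterClosed.crossNumOn_le_kStar_add_two hr hp hq hrp hrq hpq fun i _ => htor i

/-- Corollary: let `r ∈ {2,3}`, `c > 1` real, `m ≥ 1`, and primes `r < p < q ≤ cp`.
If `1/r + (p^m − 1)/(p^{m+1} − p^m) + 1/(cp) ≥ log₂(r·c·p^{m+1})/p`, then
`K₁(C_{rp^m q}) = K₁*(C_{rp^m q}) = 2 + (p^m − 1)/(p^m − p^{m−1})`. -/
theorem K1_rpmq (r : ℕ) (hr : r = 2 ∨ r = 3) (c : ℝ) (hc : 1 < c) (m : ℕ) (hm : 1 ≤ m)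
    (p q : ℕ) (hp : p.Prime) (hq : q.Prime) (hrp : r < p) (hpq : p < q)
    (hqc : (q : ℝ) ≤ c * p)
    (hlarge : 1 / (r : ℝ) + ((p : ℝ) ^ m - 1) / ((p : ℝ) ^ (m + 1) - (p : ℝ) ^ m)
        + 1 / (c * p) ≥
      Real.logb 2 ((r : ℝ) * c * (p : ℝ) ^ (m + 1)) / (p : ℝ)) :
    K1 (ZMod (r * p ^ m * q)) =
      2 + ((p : ℝ) ^ m - 1) / ((p : ℝ) ^ m - (p : ℝ) ^ (m - 1)) := by
  have hr' : r.Prime := by rcases hr with rfl | rfl <;> norm_num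
  exact K1_rpmq_general hr' hp hq hrp (hrp.trans hpq) hpq.ne hm (Nat.card_zmod _)
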